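/- Normal forms of substitutions: if Γ ⊢ s ▷ Δ is derivable and s is a normal form with respect to the one-step σπα-reduction on substitutions, then s has one of the following forms: (i) id; (ii) (…((π_{a₁}∘π_{a₂})∘…)∘π_{a_n}) with n ≥ 1; (iii) ⟨id, N₁\b₁, …, N_k\b_k⟩ with k ≥ 1; (iv) ⟨(…((π_{a₁}∘π_{a₂})∘…)∘π_{a_n}), N₁\b₁, …, N_k\b_k⟩ with n ≥ 1 and k ≥ 1. -/

import Mathlib

/- Named terms and substitutions of the λπ-calculus. Variables are natural numbers. -/
mutual
inductive Tm : Type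
  | var : ℕ → Tm
  | app : Tm → Tm → Tm
  | lam : ℕ → Tm → Tm
  | clos : Subst → Tm → Tm
inductive Subst : Type
  | id : Subst
  | pi : ℕ → Subst
  | cons : Subst → Tm → ℕ → Subst
  | comp : Subst → Subst → Subst
end

/- Contexts are lists of variables; the head of the list is the *rightmost* variable,
so the context `Γ, a` of the paper is `a :: Γ`. -/
mutual
/-- `WfTm Γ M` is the judgement `Γ ⊢ M`. -/
inductive WfTm : List ℕ → Tm → Prop
  | var (Γ : List ℕ) (a : ℕ) : WfTm (a :: Γ) (.var a)
  | weak {Γ : List ℕ} {a : ℕ} (b : ℕ) : a ≠ b → WfTm Γ (.var a) → WfTm (b :: Γ) (.var a)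
  | app {Γ M N} : WfTm Γ M → WfTm Γ N → WfTm Γ (.app M N)
  | lam {Γ a M} : WfTm (a :: Γ) M → WfTm Γ (.lam a M)
  | clos {Γ s Δ M} : WfSub Γ s Δ → WfTm Δ M → WfTm Γ (.clos s M)
/-- `WfSub Γ s Δ` is the judgement `Γ ⊢ s ▷ Δ`. -/
inductive WfSub : List ℕ → Subst → List ℕ → Prop
  | id (Γ) : WfSub Γ .id Γ
  | pi (Γ a) : WfSub (a :: Γ) (.pi a) Γ
  | cons {Γ s Δ N} (a) : WfSub Γ s Δ → WfTm Γ N → WfSub Γ (.cons s N a) (a :: Δ)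
  | comp {Γ s Δ q Θ} : WfSub Γ s Δ → WfSub Δ q Θ → WfSub Γ (.comp s q) Θ
end

/-- The operator `O_{λa}` on sequences of finite sets (sequences are 0-indexed:
index `n` corresponds to the paper's index `n+1`). -/
def Olam (a : ℕ) (A : ℕ → Finset ℕ) : ℕ → Finset ℕ
  | 0 => (A 0).erase a ∪ A 1
  | n + 1 => A (n + 2)

/-- The operator `O_π`. -/
def Opi (A : ℕ → Finset ℕ) : ℕ → Finset ℕ
  | 0 => ∅
  | n + 1 => A n

mutual
/-- The free-variable sequence of a term: `FV M n` is the paper's `FV_{n+1}(M)`. -/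
def FV : Tm → ℕ → Finset ℕ
  | .var a => fun n => if n = 0 then {a} else ∅
  | .app M N => fun n => FV M n ∪ FV N n
  | .lam a M => Olam a (FV M)
  | .clos s M => Osub s (FV M)
/-- The operator `O_s` associated with a substitution `s`. -/
def Osub : Subst → (ℕ → Finset ℕ) → (ℕ → Finset ℕ)
  | .id => fun A => A
  | .pi _ => fun A => Opi A
  | .cons s N a => fun A n => Osub s (Olam a A) n ∪ FV N n
  | .comp s q => fun A => Osub s (Osub q A)
end

/-- Iterated abstraction `λΓ.M` (recall the head of the list is the rightmost variable). -/
def lamCtx : List ℕ → Tm → Tm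
  | [], M => M
  | a :: Γ, M => lamCtx Γ (.lam a M)

/-- Free variables of a judgement: `FV(Γ ⊢ M) = FV(λΓ.M)`. -/
def FVJ (Γ : List ℕ) (M : Tm) : ℕ → Finset ℕ := FV (lamCtx Γ M)

/-- Iterated lifting `⇑_Δ(s)`. -/
def Uparrow : List ℕ → Subst → Subst
  | [], s => s
  | a :: Δ, s => .cons (.comp (.pi a) (Uparrow Δ s)) (.var a) a

/- One-step reduction of the λπ-calculus (compatible closure).  The Boolean
parameter tells whether the rule `Beta` is allowed: `StepTm true` is λπ-reduction,
`StepTm false` is σπα-reduction. -/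
mutual
inductive StepTm : Bool → Tm → Tm → Prop
  | beta {a : ℕ} {M N : Tm} :
      StepTm true (.app (.lam a M) N) (.clos (.cons .id N a) M)
  | abs {β : Bool} {s : Subst} {a : ℕ} {M : Tm} :
      StepTm β (.clos s (.lam a M))
        (.lam a (.clos (.cons (.comp (.pi a) s) (.var a) a) M))
  | app {β : Bool} {s : Subst} {M N : Tm} :
      StepTm β (.clos s (.app M N)) (.app (.clos s M) (.clos s N))
  | consVar {β : Bool} {s : Subst} {N : Tm} {a : ℕ} :
      StepTm β (.clos (.cons s N a) (.var a)) N
  | new {β : Bool} {s : Subst} {N : Tm} {a b : ℕ} : a ≠ b →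
      StepTm β (.clos (.cons s N a) (.var b)) (.clos s (.var b))
  | idVar {β : Bool} {a : ℕ} : StepTm β (.clos .id (.var a)) (.var a)
  | clos {β : Bool} {s q : Subst} {M : Tm} :
      StepTm β (.clos s (.clos q M)) (.clos (.comp s q) M)
  | pi1 {β : Bool} {a b : ℕ} : a ≠ b → StepTm β (.clos (.pi a) (.var b)) (.var b)
  | pi2 {β : Bool} {s : Subst} {a b : ℕ} : a ≠ b →
      StepTm β (.clos (.comp s (.pi a)) (.var b)) (.clos s (.var b))
  | alpha1 {β : Bool} {a b : ℕ} {M : Tm} :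
      (∃ i, a ∈ FV (.lam a M) i) → (∀ i, b ∉ FV (.lam a M) i) →
      StepTm β (.lam a M) (.lam b (.clos (.cons (.pi b) (.var b) a) M))
  | lamCong {β : Bool} {a : ℕ} {M₁ M₂ : Tm} :
      StepTm β M₁ M₂ → StepTm β (.lam a M₁) (.lam a M₂)
  | appL {β : Bool} {M₁ M₂ N : Tm} : StepTm β M₁ M₂ → StepTm β (.app M₁ N) (.app M₂ N)
  | appR {β : Bool} {M N₁ N₂ : Tm} : StepTm β N₁ N₂ → StepTm β (.app M N₁) (.app M N₂)
  | closL {β : Bool} {s₁ s₂ : Subst} {M : Tm} :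
      StepSub β s₁ s₂ → StepTm β (.clos s₁ M) (.clos s₂ M)
  | closR {β : Bool} {s : Subst} {M₁ M₂ : Tm} :
      StepTm β M₁ M₂ → StepTm β (.clos s M₁) (.clos s M₂)
inductive StepSub : Bool → Subst → Subst → Prop
  | ass {β : Bool} {s q r : Subst} :
      StepSub β (.comp s (.comp q r)) (.comp (.comp s q) r)
  | idR {β : Bool} {s : Subst} : StepSub β (.comp s .id) s
  | idShift {β : Bool} {a : ℕ} : StepSub β (.comp .id (.pi a)) (.pi a)
  | consShift {β : Bool} {s : Subst} {N : Tm} {a : ℕ} :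
      StepSub β (.comp (.cons s N a) (.pi a)) s
  | map {β : Bool} {s q : Subst} {N : Tm} {a : ℕ} :
      StepSub β (.comp s (.cons q N a)) (.cons (.comp s q) (.clos s N) a)
  | consL {β : Bool} {s₁ s₂ : Subst} {N : Tm} {a : ℕ} :
      StepSub β s₁ s₂ → StepSub β (.cons s₁ N a) (.cons s₂ N a)
  | consR {β : Bool} {s : Subst} {N₁ N₂ : Tm} {a : ℕ} :
      StepTm β N₁ N₂ → StepSub β (.cons s N₁ a) (.cons s N₂ a)
  | compL {β : Bool} {s₁ s₂ q : Subst} :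
      StepSub β s₁ s₂ → StepSub β (.comp s₁ q) (.comp s₂ q)
  | compR {β : Bool} {s q₁ q₂ : Subst} :
      StepSub β q₁ q₂ → StepSub β (.comp s q₁) (.comp s q₂)
end

/-- One-step reduction `⇝` on judgements `Γ ⊢ M`, including the rule `α₂`.
`StepJ true` is λπ, `StepJ false` is σπα. -/
inductive StepJ (β : Bool) : List ℕ × Tm → List ℕ × Tm → Prop
  | step {Γ : List ℕ} {M₁ M₂ : Tm} : StepTm β M₁ M₂ → StepJ β (Γ, M₁) (Γ, M₂)
  | alpha2 {Γ Δ : List ℕ} {a b : ℕ} {M : Tm} :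
      (∃ i, a ∈ FVJ (Δ ++ [a]) M i) → (∀ i, b ∉ FVJ (Δ ++ [a]) M i) →
      StepJ β (Δ ++ a :: Γ, M)
        (Δ ++ b :: Γ, .clos (Uparrow Δ (.cons (.pi b) (.var b) a)) M)

/- Name-free (de Bruijn) terms and substitutions. -/
mutual
inductive NTm : Type
  | one : NTm
  | app : NTm → NTm → NTm
  | lam : NTm → NTm
  | clos : NSub → NTm → NTm
inductive NSub : Type
  | id : NSub
  | pi : NSub
  | cons : NSub → NTm → NSub
  | comp : NSub → NSub → NSub
end

/-- `piIter n` is the left-nested composition of `n+1` copies of `π`. -/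
def piIter : ℕ → NSub
  | 0 => .pi
  | k + 1 => .comp (piIter k) .pi

/-- `dbr n` is the de Bruijn index `n+1̲`: `dbr 0 = 1` and
`dbr (n+1) = ((…(π∘π)∘…)∘π)∘1` with `n+1` occurrences of `π`. -/
def dbr : ℕ → NTm
  | 0 => .one
  | n + 1 => .clos (piIter n) .one

/- One-step reduction of λσ (`NStepTm true`) resp. σ (`NStepTm false`)
on name-free terms/substitutions. -/
mutual
inductive NStepTm : Bool → NTm → NTm → Prop
  | beta {U V : NTm} : NStepTm true (.app (.lam U) V) (.clos (.cons .id V) U)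
  | abs {β : Bool} {u : NSub} {U : NTm} :
      NStepTm β (.clos u (.lam U)) (.lam (.clos (.cons (.comp .pi u) .one) U))
  | app {β : Bool} {u : NSub} {U V : NTm} :
      NStepTm β (.clos u (.app U V)) (.app (.clos u U) (.clos u V))
  | consVar {β : Bool} {u : NSub} {V : NTm} : NStepTm β (.clos (.cons u V) .one) V
  | idVar {β : Bool} : NStepTm β (.clos .id .one) .one
  | clos {β : Bool} {u v : NSub} {U : NTm} :
      NStepTm β (.clos u (.clos v U)) (.clos (.comp u v) U)
  | lamCong {β : Bool} {U₁ U₂ : NTm} : NStepTm β U₁ U₂ → NStepTm β (.lam U₁) (.lam U₂)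
  | appL {β : Bool} {U₁ U₂ V : NTm} : NStepTm β U₁ U₂ → NStepTm β (.app U₁ V) (.app U₂ V)
  | appR {β : Bool} {U V₁ V₂ : NTm} : NStepTm β V₁ V₂ → NStepTm β (.app U V₁) (.app U V₂)
  | closL {β : Bool} {u₁ u₂ : NSub} {U : NTm} :
      NStepSub β u₁ u₂ → NStepTm β (.clos u₁ U) (.clos u₂ U)
  | closR {β : Bool} {u : NSub} {U₁ U₂ : NTm} :
      NStepTm β U₁ U₂ → NStepTm β (.clos u U₁) (.clos u U₂)
inductive NStepSub : Bool → NSub → NSub → Prop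
  | ass {β : Bool} {u v w : NSub} : NStepSub β (.comp u (.comp v w)) (.comp (.comp u v) w)
  | idR {β : Bool} {u : NSub} : NStepSub β (.comp u .id) u
  | idShift {β : Bool} : NStepSub β (.comp .id .pi) .pi
  | consShift {β : Bool} {u : NSub} {V : NTm} : NStepSub β (.comp (.cons u V) .pi) u
  | map {β : Bool} {u v : NSub} {V : NTm} :
      NStepSub β (.comp u (.cons v V)) (.cons (.comp u v) (.clos u V))
  | consL {β : Bool} {u₁ u₂ : NSub} {V : NTm} :
      NStepSub β u₁ u₂ → NStepSub β (.cons u₁ V) (.cons u₂ V)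
  | consR {β : Bool} {u : NSub} {V₁ V₂ : NTm} :
      NStepTm β V₁ V₂ → NStepSub β (.cons u V₁) (.cons u V₂)
  | compL {β : Bool} {u₁ u₂ v : NSub} :
      NStepSub β u₁ u₂ → NStepSub β (.comp u₁ v) (.comp u₂ v)
  | compR {β : Bool} {u v₁ v₂ : NSub} :
      NStepSub β v₁ v₂ → NStepSub β (.comp u v₁) (.comp u v₂)
end

/- The correspondence `(Γ ⊢ M) ⟹ U` resp. `(Γ ⊢ s ▷ Δ) ⟹ u` between judgements and
name-free terms/substitutions (Definition 7.6 of the paper). -/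
mutual
inductive TrTm : List ℕ → Tm → NTm → Prop
  | var (Γ : List ℕ) (a : ℕ) : TrTm (a :: Γ) (.var a) (dbr 0)
  | weak {Γ : List ℕ} {a : ℕ} {n : ℕ} (b : ℕ) : a ≠ b →
      TrTm Γ (.var a) (dbr n) → TrTm (b :: Γ) (.var a) (dbr (n + 1))
  | app {Γ M N U V} : TrTm Γ M U → TrTm Γ N V → TrTm Γ (.app M N) (.app U V)
  | lam {Γ a M U} : TrTm (a :: Γ) M U → TrTm Γ (.lam a M) (.lam U)
  | clos {Γ s Δ M u U} : TrSub Γ s Δ u → TrTm Δ M U → TrTm Γ (.clos s M) (.clos u U)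
inductive TrSub : List ℕ → Subst → List ℕ → NSub → Prop
  | id (Γ) : TrSub Γ .id Γ .id
  | pi (Γ a) : TrSub (a :: Γ) (.pi a) Γ .pi
  | cons {Γ s Δ N u V} (a) : TrSub Γ s Δ u → TrTm Γ N V →
      TrSub Γ (.cons s N a) (a :: Δ) (.cons u V)
  | comp {Γ s Δ q Θ u v} : TrSub Γ s Δ u → TrSub Δ q Θ v →
      TrSub Γ (.comp s q) Θ (.comp u v)
end

/-- Left-nested compositions `(…((π_{a₁}∘π_{a₂})∘…)∘π_{a_n}` with `n ≥ 1`. -/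
inductive IsPiComp : Subst → Prop
  | single (a : ℕ) : IsPiComp (.pi a)
  | comp {s : Subst} (a : ℕ) : IsPiComp s → IsPiComp (.comp s (.pi a))

/-- Substitutions of the form `⟨r, N₁\b₁, …, N_k\b_k⟩` with `k ≥ 1`, where `r` is `id`
or a left-nested composition of `π`'s. -/
inductive IsConsChain : Subst → Prop
  | base {s : Subst} {N : Tm} {b : ℕ} : (s = Subst.id ∨ IsPiComp s) →
      IsConsChain (.cons s N b)
  | cons {s : Subst} {N : Tm} {b : ℕ} : IsConsChain s → IsConsChain (.cons s N b)

/-- The four shapes (i)–(iv) of σπα-normal substitutions. -/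
def NFShape (s : Subst) : Prop := s = Subst.id ∨ IsPiComp s ∨ IsConsChain s

/-- A term is pure iff it contains no subterm of the shape `s∘N`. -/
def PureTm : Tm → Prop
  | .var _ => True
  | .app M N => PureTm M ∧ PureTm N
  | .lam _ M => PureTm M
  | .clos _ _ => False

/-- `PiChainEnd s b`: `s` is a left-nested composition of `π`'s whose rightmost factor
is `π_b`, i.e. `s = ((…(π_{a₁}∘…)∘π_{a_m})∘π_b` with `m ≥ 0`. -/
inductive PiChainEnd : Subst → ℕ → Prop
  | single (b : ℕ) : PiChainEnd (.pi b) b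
  | comp {s : Subst} (b : ℕ) : IsPiComp s → PiChainEnd (.comp s (.pi b)) b

/-- Terms constructed from variables and blocks `((…((π_{a₁}∘π_{a₂})∘…)∘π_b)∘b`
(with `m ≥ 0` factors before `π_b`) using application and abstraction only. -/
inductive FromBlocks : Tm → Prop
  | var (a : ℕ) : FromBlocks (.var a)
  | block {s : Subst} {b : ℕ} : PiChainEnd s b → FromBlocks (.clos s (.var b))
  | app {M N : Tm} : FromBlocks M → FromBlocks N → FromBlocks (.app M N)
  | lam {M : Tm} (a : ℕ) : FromBlocks M → FromBlocks (.lam a M)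

/- The compatible closure of the single rule α₁ on terms and substitutions. -/
mutual
inductive A1Tm : Tm → Tm → Prop
  | alpha1 {a b : ℕ} {M : Tm} :
      (∃ i, a ∈ FV (.lam a M) i) → (∀ i, b ∉ FV (.lam a M) i) →
      A1Tm (.lam a M) (.lam b (.clos (.cons (.pi b) (.var b) a) M))
  | lamCong {a : ℕ} {M₁ M₂ : Tm} : A1Tm M₁ M₂ → A1Tm (.lam a M₁) (.lam a M₂)
  | appL {M₁ M₂ N : Tm} : A1Tm M₁ M₂ → A1Tm (.app M₁ N) (.app M₂ N)
  | appR {M N₁ N₂ : Tm} : A1Tm N₁ N₂ → A1Tm (.app M N₁) (.app M N₂)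
  | closL {s₁ s₂ : Subst} {M : Tm} : A1Sub s₁ s₂ → A1Tm (.clos s₁ M) (.clos s₂ M)
  | closR {s : Subst} {M₁ M₂ : Tm} : A1Tm M₁ M₂ → A1Tm (.clos s M₁) (.clos s M₂)
inductive A1Sub : Subst → Subst → Prop
  | consL {s₁ s₂ : Subst} {N : Tm} {a : ℕ} : A1Sub s₁ s₂ → A1Sub (.cons s₁ N a) (.cons s₂ N a)
  | consR {s : Subst} {N₁ N₂ : Tm} {a : ℕ} : A1Tm N₁ N₂ → A1Sub (.cons s N₁ a) (.cons s N₂ a)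
  | compL {s₁ s₂ q : Subst} : A1Sub s₁ s₂ → A1Sub (.comp s₁ q) (.comp s₂ q)
  | compR {s q₁ q₂ : Subst} : A1Sub q₁ q₂ → A1Sub (.comp s q₁) (.comp s q₂)
end

/-!
In a normal composition the right factor must be some `π_a`, since `IdR`, `Map` and `Ass` contract
all others. The left factor is then normal and, by `IdShift`, not `id`. It is not an extension
`⟨r, N\b⟩` either: typing forces `b = a`, and `ConsShift` would apply. So inductively it is a
composition of `π`'s.
-/

/-- Normal forms of substitutions: `s.IsNormal β` says that no one-step reduction applies to `s`,
in λπ for `β = true` and in σπα for `β = false`. -/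
def Subst.IsNormal (β : Bool) (s : Subst) : Prop :=
  ∀ s' : Subst, ¬ StepSub β s s'

namespace Subst.IsNormal

variable {β : Bool} {s q : Subst} {a : ℕ}

theorem of_cons {N : Tm} {b : ℕ} (h : (cons s N b).IsNormal β) : s.IsNormal β :=
  fun _ hs => h _ (.consL hs)

theorem of_comp_left (h : (comp s q).IsNormal β) : s.IsNormal β :=
  fun _ hs => h _ (.compL hs)

theorem exists_eq_pi_of_comp (h : (comp s q).IsNormal β) : ∃ a, q = .pi a :=
  match q with
  | .id => absurd .idR (h _)
  | .pi a => ⟨a, rfl⟩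
  | .cons _ _ _ => absurd .map (h _)
  | .comp _ _ => absurd .ass (h _)

theorem ne_id_of_comp_pi (h : (comp s (.pi a)).IsNormal β) : s ≠ .id := by
  rintro rfl
  exact h _ .idShift

theorem ne_cons_of_comp_pi (h : (comp s (.pi a)).IsNormal β) (r : Subst) (N : Tm) :
    s ≠ .cons r N a := by
  rintro rfl
  exact h _ .consShift

end Subst.IsNormal

theorem WfSub.exists_eq_cons_of_isConsChain {Γ Δ : List ℕ} {s : Subst} {a : ℕ}
    (hs : WfSub Γ s (a :: Δ)) (hchain : IsConsChain s) : ∃ r N, s = .cons r N a := by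
  cases hchain <;> cases hs <;> exact ⟨_, _, rfl⟩

theorem NFShape.cons {s : Subst} {N : Tm} {b : ℕ} : NFShape s → NFShape (.cons s N b)
  | .inl hid => .inr (.inr (.base (.inl hid)))
  | .inr (.inl hpi) => .inr (.inr (.base (.inr hpi)))
  | .inr (.inr hchain) => .inr (.inr (.cons hchain))

theorem NFShape.comp_pi {β : Bool} {Γ Δ : List ℕ} {s : Subst} {a : ℕ} (hshape : NFShape s)
    (hs : WfSub Γ s (a :: Δ)) (hnf : (Subst.comp s (.pi a)).IsNormal β) :
    NFShape (.comp s (.pi a)) := by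
  rcases hshape with hid | hpi | hchain
  · exact absurd hid hnf.ne_id_of_comp_pi
  · exact .inr (.inl (.comp a hpi))
  · obtain ⟨r, N, hcons⟩ := hs.exists_eq_cons_of_isConsChain hchain
    exact absurd hcons (hnf.ne_cons_of_comp_pi r N)

/-- a derivable substitution that is a σπα-normal form has one
of the four shapes (i)–(iv). -/
theorem subst_normal_form_shape {Γ Δ : List ℕ} {s : Subst}
    (h : WfSub Γ s Δ) (hnf : ∀ s' : Subst, ¬ StepSub false s s') : NFShape s := by
  replace hnf : s.IsNormal false := hnf
  match h with
  | .id _ => exact .inl rfl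
  | .pi _ a => exact .inr (.inl (.single a))
  | .cons _ hs _ => exact (subst_normal_form_shape hs hnf.of_cons).cons
  | .comp hs hq =>
    obtain ⟨a, rfl⟩ := hnf.exists_eq_pi_of_comp
    cases hq
    exact (subst_normal_form_shape hs hnf.of_comp_left).comp_pi hs hnf
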